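/- Let s, t be nonzero real numbers with s² + 4t ≥ 0 and assume {k}_{s,t} ≠ 0 for all 1 ≤ k ≤ d+1. Then for every integer d ≥ 1 and every n ≥ 1, the generalized simplicial (d+1)-polytopic numbers satisfy {n+d \choose d+1}_{s,t} = Σ_{k=1}^{n} φ_{s,t}^{(d+1)(n−k)} · (φ'_{s,t})^{k−1} · {k+d−1 \choose d}_{s,t}. -/

import Mathlib

/-- Generalized Fibonacci polynomials/numbers: `{0} = 0`, `{1} = 1`,
`{n+2} = s·{n+1} + t·{n}`. -/
noncomputable def gfib (s t : ℝ) : ℕ → ℝ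
  | 0 => 0
  | 1 => 1
  | n + 2 => s * gfib s t (n + 1) + t * gfib s t n

/-- Generalized fibotorial `{n}! = {1}·{2}⋯{n}`, with `{0}! = 1`. -/
noncomputable def gfibFact (s t : ℝ) (n : ℕ) : ℝ :=
  ∏ k ∈ Finset.range n, gfib s t (k + 1)

/-- Generalized fibonomial coefficient `{n choose k} = {n}!/({k}!·{n−k}!)`. -/
noncomputable def gfibBinom (s t : ℝ) (n k : ℕ) : ℝ :=
  gfibFact s t n / (gfibFact s t k * gfibFact s t (n - k))

/-- `φ_{s,t} = (s + √(s²+4t))/2`. -/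
noncomputable def phiST (s t : ℝ) : ℝ := (s + Real.sqrt (s ^ 2 + 4 * t)) / 2

/-- `φ'_{s,t} = (s − √(s²+4t))/2`. -/
noncomputable def phiST' (s t : ℝ) : ℝ := (s - Real.sqrt (s ^ 2 + 4 * t)) / 2

/-- Generalized triangular numbers `{n+1 choose 2} = {n}·{n+1}/{2}`. -/
noncomputable def gtri (s t : ℝ) (n : ℕ) : ℝ :=
  gfib s t n * gfib s t (n + 1) / gfib s t 2

/-- Generalized tetrahedral numbers
`{n+2 choose 3} = {n}·{n+1}·{n+2}/({1}·{2}·{3})`. -/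
noncomputable def gtet (s t : ℝ) (n : ℕ) : ℝ :=
  gfib s t n * gfib s t (n + 1) * gfib s t (n + 2) /
    (gfib s t 1 * gfib s t 2 * gfib s t 3)

/-!
Let `a, b` be the real roots of `x² = sx + t`. The identity `{m + n} = aⁿ{m} + bᵐ{n}` gives the
fibonomial coefficients a Pascal rule, which for the polytopic numbers is the first-order linear
recurrence `{n+d+1 \choose d+1} = a^(d+1) {n+d \choose d+1} + bⁿ {n+d \choose d}` in `n`; unrolling
it is the claimed sum. No denominator vanishes: `{n} = ∑ bⁱ aⁿ⁻¹⁻ⁱ` is zero for some `n ≠ 0` only if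
`a = -b`, that is, only if `s = 0`.
-/

open Finset

theorem geom_sum₂_ne_zero {R : Type*} [CommRing R] [LinearOrder R] [IsStrictOrderedRing R]
    {x y : R} {n : ℕ} (hxy : x + y ≠ 0) (hn : n ≠ 0) :
    ∑ i ∈ range n, x ^ i * y ^ (n - 1 - i) ≠ 0 := by
  obtain rfl | hne := eq_or_ne x y
  · have hx : x ≠ 0 := fun h => hxy (by simp [h])
    rw [geom_sum₂_self]
    exact mul_ne_zero (Nat.cast_ne_zero.mpr hn) (pow_ne_zero _ hx)
  · intro hsum
    have hpow : x ^ n = y ^ n := by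
      rw [← sub_eq_zero, ← geom_sum₂_mul, hsum, zero_mul]
    rcases (pow_eq_pow_iff_of_ne_zero hn).mp hpow with h | ⟨h, -⟩
    · exact hne h
    · exact hxy (eq_neg_iff_add_eq_zero.mp h)

theorem eq_sum_Icc_of_succ_eq_mul_add {R : Type*} [Semiring R] {q : R} {u c : ℕ → R} {m n : ℕ}
    (hbase : u m = c m) (hsucc : ∀ k, m ≤ k → u (k + 1) = q * u k + c (k + 1)) (hmn : m ≤ n) :
    u n = ∑ k ∈ Icc m n, q ^ (n - k) * c k := by
  induction n, hmn using Nat.le_induction with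
  | base => simp [hbase]
  | succ n hmn ih =>
    rw [hsucc n hmn, ih, sum_Icc_succ_top (by lia), mul_sum, Nat.sub_self, pow_zero, one_mul]
    congr 1
    refine sum_congr rfl fun k hk => ?_
    rw [Nat.succ_sub (mem_Icc.mp hk).2, pow_succ', mul_assoc]

theorem phiST_add_phiST' (s t : ℝ) : phiST s t + phiST' s t = s := by
  unfold phiST phiST'
  ring

theorem phiST_mul_phiST' {s t : ℝ} (hdisc : 0 ≤ s ^ 2 + 4 * t) :
    phiST s t * phiST' s t = -t := by
  unfold phiST phiST'
  linear_combination -(Real.sq_sqrt hdisc) / 4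

section

variable {s t a b : ℝ}

theorem gfib_succ (hadd : a + b = s) (hmul : a * b = -t) (n : ℕ) :
    gfib s t (n + 1) = a * gfib s t n + b ^ n := by
  induction n with
  | zero => simp [gfib]
  | succ n ih =>
    rw [gfib]
    linear_combination b * ih - gfib s t (n + 1) * hadd + gfib s t n * hmul

theorem gfib_eq_geom_sum₂ (hadd : a + b = s) (hmul : a * b = -t) (n : ℕ) :
    gfib s t n = ∑ i ∈ range n, b ^ i * a ^ (n - 1 - i) := by
  induction n with
  | zero => simp [gfib]
  | succ n ih =>
    rw [gfib_succ hadd hmul, ih, Nat.add_sub_cancel, geom_sum₂_succ_eq, add_comm]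

theorem gfib_ne_zero (hadd : a + b = s) (hmul : a * b = -t) (hs : s ≠ 0) {n : ℕ} (hn : n ≠ 0) :
    gfib s t n ≠ 0 := by
  rw [gfib_eq_geom_sum₂ hadd hmul]
  exact geom_sum₂_ne_zero (by rwa [add_comm, hadd]) hn

theorem gfibFact_ne_zero (hadd : a + b = s) (hmul : a * b = -t) (hs : s ≠ 0) (n : ℕ) :
    gfibFact s t n ≠ 0 :=
  prod_ne_zero_iff.mpr fun k _ => gfib_ne_zero hadd hmul hs k.succ_ne_zero

theorem gfib_add (hadd : a + b = s) (hmul : a * b = -t) (m n : ℕ) :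
    gfib s t (m + n) = a ^ n * gfib s t m + b ^ m * gfib s t n := by
  induction n with
  | zero => simp [gfib]
  | succ n ih =>
    rw [← add_assoc, gfib_succ hadd hmul, gfib_succ hadd hmul n, ih]
    ring

theorem gfibFact_zero (s t : ℝ) : gfibFact s t 0 = 1 :=
  prod_range_zero _

theorem gfibFact_succ (s t : ℝ) (n : ℕ) :
    gfibFact s t (n + 1) = gfibFact s t n * gfib s t (n + 1) :=
  prod_range_succ _ _

theorem gfibBinom_self {n : ℕ} (h : gfibFact s t n ≠ 0) : gfibBinom s t n n = 1 := by
  rw [gfibBinom, Nat.sub_self, gfibFact_zero, mul_one, div_self h]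

/-- By truncated subtraction, `gfibBinom s t n (n + 1)` is `1 / {n+1}` rather than `0`. -/
theorem gfibBinom_succ_succ (hadd : a + b = s) (hmul : a * b = -t) {n k : ℕ}
    (hkn : k < n) (hk : gfib s t (k + 1) ≠ 0) (hnk : gfib s t (n - k) ≠ 0) :
    gfibBinom s t (n + 1) (k + 1) =
      a ^ (k + 1) * gfibBinom s t n (k + 1) + b ^ (n - k) * gfibBinom s t n k := by
  obtain ⟨m, rfl⟩ := Nat.exists_eq_add_of_lt hkn
  have hsub : k + m + 1 - k = m + 1 := by lia
  have hsub_succ : k + m + 1 - (k + 1) = m := by lia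
  have hsplit : gfib s t (k + m + 1 + 1) =
      a ^ (k + 1) * gfib s t (m + 1) + b ^ (m + 1) * gfib s t (k + 1) := by
    rw [← gfib_add hadd hmul, show k + m + 1 + 1 = m + 1 + (k + 1) by lia]
  rw [hsub] at hnk ⊢
  simp only [gfibBinom, Nat.add_sub_add_right, hsub, hsub_succ]
  rw [gfibFact_succ s t (k + m + 1), hsplit, gfibFact_succ s t k, gfibFact_succ s t m]
  field_simp

end

theorem stmt0 (s t : ℝ) (hs : s ≠ 0) (ht : t ≠ 0) (hdisc : s ^ 2 + 4 * t ≥ 0)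
    (d : ℕ) (hd : 1 ≤ d) (hnz : ∀ k : ℕ, 1 ≤ k → k ≤ d + 1 → gfib s t k ≠ 0)
    (n : ℕ) (hn : 1 ≤ n) :
    gfibBinom s t (n + d) (d + 1) =
      ∑ k ∈ Finset.Icc 1 n,
        phiST s t ^ ((d + 1) * (n - k)) * phiST' s t ^ (k - 1) *
          gfibBinom s t (k + d - 1) d := by
  have hadd := phiST_add_phiST' s t
  have hmul := phiST_mul_phiST' hdisc
  have hbinom_self (m : ℕ) : gfibBinom s t m m = 1 :=
    gfibBinom_self (gfibFact_ne_zero hadd hmul hs m)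
  have hbase : gfibBinom s t (1 + d) (d + 1) =
      phiST' s t ^ (1 - 1) * gfibBinom s t (1 + d - 1) d := by
    rw [Nat.add_comm 1 d, Nat.add_sub_cancel, hbinom_self, hbinom_self, Nat.sub_self, pow_zero,
      mul_one]
  have hsucc (k : ℕ) (hk : 1 ≤ k) : gfibBinom s t (k + 1 + d) (d + 1) =
      phiST s t ^ (d + 1) * gfibBinom s t (k + d) (d + 1) +
        phiST' s t ^ (k + 1 - 1) * gfibBinom s t (k + 1 + d - 1) d := by
    have hpascal := gfibBinom_succ_succ hadd hmul (n := k + d) (k := d) (by lia)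
      (gfib_ne_zero hadd hmul hs (by lia)) (gfib_ne_zero hadd hmul hs (by lia))
    rw [Nat.add_right_comm k 1 d, hpascal, Nat.add_sub_cancel, Nat.add_sub_cancel,
      Nat.add_sub_cancel]
  simp only [pow_mul, mul_assoc]
  exact eq_sum_Icc_of_succ_eq_mul_add (u := fun k => gfibBinom s t (k + d) (d + 1))
    (c := fun k => phiST' s t ^ (k - 1) * gfibBinom s t (k + d - 1) d) hbase hsucc hn
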